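/- arXiv:1906.01898 — 2 statements merged into one kernel-verified Lean document; each statement's English description precedes it below -/
import Mathlib

section
/- Let Ω be the simple Toeplitz subshift defined by coding sequences (a_k) and (n_k), with eventual alphabet Ã = {a^(1),…,a^(r)} of cardinality at least 2, K̃ such that a_k ∈ Ã for all k ≥ K̃, and leading words ω^(1),…,ω^(r). Then for every L ≥ |block(K̃)| and every word u of length L occurring in some element of Ω, there exist j ∈ {1,…,r} and k ∈ {1,…,L} such that u = ω^(j)(−k)⋯ω^(j)(−k+L−1). -/
open Filter Topology MeasureTheory

noncomputable section

abbrev SL2 := Matrix.SpecialLinearGroup (Fin 2) ℝ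

/-- Operator norm of a 2×2 real matrix acting on Euclidean ℝ². -/
def matNorm (M : Matrix (Fin 2) (Fin 2) ℝ) : ℝ :=
  ‖LinearMap.toContinuousLinearMap (Matrix.toEuclideanLin M)‖

/-- Norm of an element of SL(2,ℝ). -/
def slNorm (M : SL2) : ℝ := matNorm (M : Matrix (Fin 2) (Fin 2) ℝ)

/-- Action of an SL(2,ℝ) matrix on a euclidean vector. -/
def slAct (M : SL2) (v : EuclideanSpace ℝ (Fin 2)) : EuclideanSpace ℝ (Fin 2) :=
  Matrix.toEuclideanLin (M : Matrix (Fin 2) (Fin 2) ℝ) v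

variable {𝒜 : Type*}

/-- The shift by `k` on two-sided sequences; `shift 1` is the left shift `T`. -/
def shift (k : ℤ) (ω : ℤ → 𝒜) : ℤ → 𝒜 := fun n => ω (n + k)

/-- `Ω ⊆ 𝒜^ℤ` is a subshift: nonempty, closed, invariant under the shift and its inverse. -/
structure IsSubshift [TopologicalSpace 𝒜] (Ω : Set (ℤ → 𝒜)) : Prop where
  nonempty : Ω.Nonempty
  closed : IsClosed Ω
  shift_mem : ∀ ω ∈ Ω, shift 1 ω ∈ Ω
  shift_neg_mem : ∀ ω ∈ Ω, shift (-1) ω ∈ Ω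

/-- The word `ω(k) ω(k+1) ⋯ ω(k+n-1)`. -/
def word (ω : ℤ → 𝒜) (k : ℤ) (n : ℕ) : List 𝒜 := (List.range n).map fun i => ω (k + i)

/-- `v` occurs in `ω` at position `k`. -/
def occursAt (v : List 𝒜) (ω : ℤ → 𝒜) (k : ℤ) : Prop := v = word ω k v.length

/-- The words of length `n` occurring in elements of `Ω`. -/
def WordsN (Ω : Set (ℤ → 𝒜)) (n : ℕ) : Set (List 𝒜) :=
  {v | ∃ ω ∈ Ω, ∃ k : ℤ, v = word ω k n}

/-- The (nonempty) finite words occurring in elements of `Ω`. -/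
def Words (Ω : Set (ℤ → 𝒜)) : Set (List 𝒜) :=
  {v | 1 ≤ v.length ∧ v ∈ WordsN Ω v.length}

/-- `A` is locally constant on `Ω`: its value depends only on a finite window around 0. -/
def LocConstOn (Ω : Set (ℤ → 𝒜)) {β : Type*} (A : (ℤ → 𝒜) → β) : Prop :=
  ∃ N : ℕ, ∀ ω ∈ Ω, ∀ ρ ∈ Ω, (∀ i : ℤ, |i| ≤ (N : ℤ) → ω i = ρ i) → A ω = A ρ

/-- The positive part of the cocycle: `cocycleP A n ω = A(T^{n-1}ω) ⋯ A(ω)`. -/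
def cocycleP (A : (ℤ → 𝒜) → SL2) : ℕ → (ℤ → 𝒜) → SL2
  | 0, _ => 1
  | n + 1, ω => A (shift n ω) * cocycleP A n ω

/-- The full cocycle over the shift, `n ∈ ℤ`. -/
def cocycle (A : (ℤ → 𝒜) → SL2) (n : ℤ) (ω : ℤ → 𝒜) : SL2 :=
  if 0 ≤ n then cocycleP A n.toNat ω else (cocycleP A (-n).toNat (shift n ω))⁻¹

/-- `A` is uniform on `Ω`: `(1/n) log‖A(n,ω)‖` converges uniformly on `Ω`. -/
def IsUniform (Ω : Set (ℤ → 𝒜)) (A : (ℤ → 𝒜) → SL2) : Prop :=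
  ∃ Λ : ℝ, TendstoUniformlyOn
    (fun (n : ℕ) (ω : ℤ → 𝒜) => Real.log (slNorm (cocycle A n ω)) / n)
    (fun _ => Λ) atTop Ω

/-- The number of occurrences of `v` in `ω(1)⋯ω(n)`. -/
def occCount (v : List 𝒜) (ω : ℤ → 𝒜) (n : ℕ) : ℕ :=
  Set.ncard {k : ℤ | 1 ≤ k ∧ k + v.length ≤ (n : ℤ) + 1 ∧ occursAt v ω k}

/-- Uniform existence of word frequencies (unique ergodicity). -/
def UniformWordFreq (Ω : Set (ℤ → 𝒜)) : Prop :=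
  ∀ v ∈ Words Ω, ∃ ν : ℝ, TendstoUniformlyOn
    (fun (n : ℕ) (ω : ℤ → 𝒜) => (occCount v ω n : ℝ) / n) (fun _ => ν) atTop Ω

/-- Minimality: every orbit is dense in `Ω`. -/
def IsMinimalSubshift [TopologicalSpace 𝒜] (Ω : Set (ℤ → 𝒜)) : Prop :=
  ∀ ω ∈ Ω, ∀ ρ ∈ Ω, ρ ∈ closure {σ : ℤ → 𝒜 | ∃ k : ℤ, σ = shift k ω}

/-- Condition (α): for all large `n`, the words of length `n` of `Ω` are exactly the
words `lead j (-k+1) ⋯ lead j (-k+n)`, `0 ≤ k ≤ n`, of the leading words. -/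
def CondAlpha (Ω : Set (ℤ → 𝒜)) {r : ℕ} (lead : Fin r → (ℤ → 𝒜)) : Prop :=
  (∀ j, lead j ∈ Ω) ∧ ∃ N : ℕ, ∀ n : ℕ, N ≤ n →
    WordsN Ω n = {v | ∃ j : Fin r, ∃ k : ℕ, k ≤ n ∧ v = word (lead j) (1 - (k : ℤ)) n}

/-- Condition (β): for every locally constant cocycle the Lyapunov limits along the
leading words exist in both time directions and all have the same value. -/
def CondBeta (Ω : Set (ℤ → 𝒜)) {r : ℕ} (lead : Fin r → (ℤ → 𝒜)) : Prop :=
  ∀ A : (ℤ → 𝒜) → SL2, LocConstOn Ω A → ∃ Λ : ℝ, ∀ j : Fin r,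
    Tendsto (fun n : ℕ => Real.log (slNorm (cocycle A n (lead j))) / n) atTop (𝓝 Λ) ∧
    Tendsto (fun n : ℕ => Real.log (slNorm (cocycle A (-(n : ℤ)) (lead j))) / n) atTop (𝓝 Λ)

/-- Condition (γ): along the leading words, for every locally constant cocycle and every
nonzero vector, at most one of the two one-sided exponents is negative. -/
def CondGamma (Ω : Set (ℤ → 𝒜)) {r : ℕ} (lead : Fin r → (ℤ → 𝒜)) : Prop :=
  ∀ A : (ℤ → 𝒜) → SL2, LocConstOn Ω A → ∀ j : Fin r,
    ∀ v : EuclideanSpace ℝ (Fin 2), v ≠ 0 →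
    ¬ (limsup (fun n : ℕ => Real.log ‖slAct (cocycle A n (lead j)) v‖ / n) atTop < 0 ∧
       limsup (fun n : ℕ => Real.log ‖slAct (cocycle A (-(n : ℤ)) (lead j)) v‖ / n) atTop < 0)

/-- The leading sequence condition (LSC). -/
def SatisfiesLSC (Ω : Set (ℤ → 𝒜)) : Prop :=
  ∃ (r : ℕ) (lead : Fin r → (ℤ → 𝒜)), CondAlpha Ω lead ∧ CondBeta Ω lead ∧ CondGamma Ω lead

/-- `F` is subadditive on the words of `Ω`. -/
def SubadditiveOn (Ω : Set (ℤ → 𝒜)) (F : List 𝒜 → ℝ) : Prop :=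
  ∀ x y : List 𝒜, x ∈ Words Ω → y ∈ Words Ω → (x ++ y) ∈ Words Ω → F (x ++ y) ≤ F x + F y

/-- `Fb` is the asymptotic mean `lim_n max { F x / n : x ∈ W(Ω)_n }` of `F`. -/
def IsAsympMean (Ω : Set (ℤ → 𝒜)) (F : List 𝒜 → ℝ) (Fb : ℝ) : Prop :=
  Tendsto (fun n : ℕ => sSup ((fun x => F x / n) '' WordsN Ω n)) atTop (𝓝 Fb)

/-- Maximal number of pairwise disjoint occurrences of `v` in `ω(1)⋯ω(n)`. -/
def disjCount (v : List 𝒜) (ω : ℤ → 𝒜) (n : ℕ) : ℕ :=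
  sSup {m : ℕ | ∃ S : Finset ℤ, S.card = m ∧
    (∀ k ∈ S, 1 ≤ k ∧ k + v.length ≤ (n : ℤ) + 1 ∧ occursAt v ω k) ∧
    (∀ k ∈ S, ∀ l ∈ S, k ≠ l → (v.length : ℤ) ≤ |k - l|)}

/-- Condition (PQ) for the one-sided word `p(1)p(2)⋯`. -/
def CondPQ (p : ℤ → 𝒜) : Prop :=
  ∃ c : ℝ, 0 < c ∧ ∀ m : ℕ, 1 ≤ m →
    c ≤ liminf (fun n : ℕ => (m : ℝ) / n * disjCount (word p 1 m) p n) atTop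

/-- ℓ²(ℤ) over the reals. -/
abbrev Ell2Z : Type := lp (fun _ : ℤ => ℝ) 2

/-- `H` acts as the Jacobi operator with coefficients `f, g` at `ω`. -/
def IsJacobiAt (f g : (ℤ → 𝒜) → ℝ) (ω : ℤ → 𝒜) (H : Ell2Z →L[ℝ] Ell2Z) : Prop :=
  ∀ u : Ell2Z, ∀ n : ℤ,
    (H u : ∀ _ : ℤ, ℝ) n =
      f (shift n ω) * (u : ∀ _ : ℤ, ℝ) (n - 1) + f (shift (n + 1) ω) * (u : ∀ _ : ℤ, ℝ) (n + 1)
        + g (shift n ω) * (u : ∀ _ : ℤ, ℝ) n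

/-- The pair `(f,g)` is periodic on `Ω`. -/
def PeriodicPair (Ω : Set (ℤ → 𝒜)) (f g : (ℤ → 𝒜) → ℝ) : Prop :=
  ∃ P : ℕ, 1 ≤ P ∧ ∀ ω ∈ Ω, f (shift (P : ℤ) ω) = f ω ∧ g (shift (P : ℤ) ω) = g ω

/-- `S ⊆ ℝ` is a Cantor set of Lebesgue measure zero: compact, empty interior,
no isolated points, Lebesgue measure zero. -/
def IsMeasureZeroCantor (S : Set ℝ) : Prop :=
  IsCompact S ∧ interior S = ∅ ∧ Perfect S ∧ volume S = 0

/-- `n` copies of `x` separated by `n-1` copies of the letter `l`. -/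
def sepJoin (x : List 𝒜) (l : 𝒜) (m : ℕ) : List 𝒜 :=
  (List.replicate (m - 1) (x ++ [l])).flatten ++ x

/-- `Blk a nseq (k+1)` is the block `block(k)` of the simple Toeplitz construction
(with `Blk a nseq 0 = block(-1) = ε`). -/
def Blk (a : ℕ → 𝒜) (nseq : ℕ → ℕ) : ℕ → List 𝒜
  | 0 => []
  | k + 1 => sepJoin (Blk a nseq k) (a k) (nseq k)

/-- `p(1)p(2)⋯` is the one-sided word `block(∞)`: every block is a prefix of it. -/
def IsBlockInf (a : ℕ → 𝒜) (nseq : ℕ → ℕ) (p : ℤ → 𝒜) : Prop :=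
  ∀ k : ℕ, word p 1 (Blk a nseq k).length = Blk a nseq k

/-- The simple Toeplitz subshift generated by `block(∞) = p(1)p(2)⋯`: all two-sided
sequences whose finite subwords all occur in `block(∞)`. -/
def toeplitzΩ (p : ℤ → 𝒜) : Set (ℤ → 𝒜) :=
  {ω | ∀ (i : ℤ) (n : ℕ), ∃ l : ℤ, 1 ≤ l ∧ word ω i n = word p l n}

/-- The eventual alphabet: letters occurring infinitely often in `(a_k)`. -/
def EvAlph (a : ℕ → 𝒜) : Set 𝒜 := {x | ∀ K : ℕ, ∃ k, K ≤ k ∧ a k = x}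

/-- The leading word `p^R v | p`: equals `p(n+1)` for `n ≥ 0`, carries the word `v` on
positions `-|v|, …, -1`, and equals `p(-(n+|v|))` for `n < -|v|`. -/
def leadWordGen (p : ℤ → 𝒜) (v : List 𝒜) : ℤ → 𝒜 := fun n =>
  if 0 ≤ n then p (n + 1)
  else if -(v.length : ℤ) ≤ n then v.getD (n + v.length).toNat (p 1)
  else p (-(n + v.length))

/-- The Gauss map. -/
def gaussMap (x : ℝ) : ℝ := 1 / x - ⌊1 / x⌋

/-- `cfSeq α n` is the continued fraction coefficient `a_{n+1}` of `α`. -/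
def cfSeq (α : ℝ) (n : ℕ) : ℕ := ⌊1 / (gaussMap^[n] α)⌋₊

/-- The standard Sturmian words: `sturmW α (n+1) = s_n`, `sturmW α 0 = s_{-1} = 1`,
`sturmW α 1 = s_0 = 0`, `s_1 = s_0^{a_1 - 1} s_{-1}`, `s_n = s_{n-1}^{a_n} s_{n-2}`. -/
def sturmW (α : ℝ) : ℕ → List (Fin 2)
  | 0 => [1]
  | 1 => [0]
  | 2 => List.replicate (cfSeq α 0 - 1) (0 : Fin 2) ++ [1]
  | n + 3 => (List.replicate (cfSeq α (n + 1)) (sturmW α (n + 2))).flatten ++ sturmW α (n + 1)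

/-- The Sturmian subshift with rotation number `α`: all two-sided sequences whose finite
subwords occur in some `s_n`. -/
def sturmΩ (α : ℝ) : Set (ℤ → Fin 2) :=
  {ω | ∀ (i : ℤ) (n : ℕ), ∃ m : ℕ, word ω i n <:+: sturmW α m}

/-- The positive cocycle of a map `A` over a transformation `T`:
`cocycleH T A n ω = A(T^{n-1}ω) ⋯ A(ω)`. -/
def cocycleH {Ω : Type*} (T : Ω → Ω) (A : Ω → SL2) : ℕ → Ω → SL2
  | 0, _ => 1
  | n + 1, ω => A (T^[n] ω) * cocycleH T A n ω

end
section

variable {𝒜 : Type*}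

theorem word_eq (ω : ℤ → 𝒜) (k : ℤ) (n : ℕ) :
    word ω k n = (List.range n).map fun i : ℕ => ω (k + (i : ℤ)) := by
  unfold word
  simp [List.map_eq_flatMap, List.flatMap_assoc]

theorem sj_get (x : List 𝒜) (l : 𝒜) (q j : ℕ) (hj : j < q * (x.length + 1) + x.length) :
    ((List.replicate q (x ++ [l])).flatten ++ x)[j]? =
      if (x.length + 1) ∣ (j + 1) then some l else x[(j + 1) % (x.length + 1) - 1]? := by
  induction q generalizing j with
  | zero =>
    have h1 : ¬ (x.length + 1) ∣ (j + 1) := fun h => by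
      have := Nat.le_of_dvd (by omega) h
      omega
    rw [if_neg h1, Nat.mod_eq_of_lt (by omega)]
    simp
  | succ q ih =>
    rw [List.replicate_succ, List.flatten_cons, List.append_assoc]
    by_cases h : j < x.length + 1
    · rw [List.getElem?_append_left (by simpa using h)]
      by_cases h2 : j = x.length
      · subst h2
        simp
      · have h1 : ¬ (x.length + 1) ∣ (j + 1) := fun h => by
          have := Nat.le_of_dvd (by omega) h
          omega
        rw [if_neg h1, Nat.mod_eq_of_lt (by omega), List.getElem?_append_left (by omega)]
        simp
    · rw [List.getElem?_append_right (by simp; omega)]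
      have e : (x ++ [l]).length = x.length + 1 := by simp
      rw [e, ih _ (by rw [Nat.succ_mul] at hj; omega)]
      obtain ⟨t, rfl⟩ : ∃ t, j = t + (x.length + 1) := ⟨j - (x.length + 1), by omega⟩
      have e2 : t + (x.length + 1) + 1 = (t + 1) + (x.length + 1) := by ring
      rw [e2]
      simp only [Nat.add_sub_cancel, Nat.add_mod_right, Nat.dvd_add_self_right]

def mm (a : ℕ → 𝒜) (nseq : ℕ → ℕ) (k : ℕ) : ℕ := (Blk a nseq k).length + 1

theorem mm_succ (a : ℕ → 𝒜) (nseq : ℕ → ℕ) (hn : ∀ k, 2 ≤ nseq k) (k : ℕ) :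
    mm a nseq (k + 1) = nseq k * mm a nseq k := by
  obtain ⟨c, hc⟩ : ∃ c, nseq k = c + 1 := ⟨nseq k - 1, by have := hn k; omega⟩
  simp [mm, Blk, sepJoin, hc]
  ring

theorem mm_dvd (a : ℕ → 𝒜) (nseq : ℕ → ℕ) (hn : ∀ k, 2 ≤ nseq k) {i j : ℕ} (h : i ≤ j) :
    mm a nseq i ∣ mm a nseq j := by
  induction j, h using Nat.le_induction with
  | base => exact dvd_rfl
  | succ j _ ih => rw [mm_succ a nseq hn]; exact ih.mul_left _

theorem mm_pos (a : ℕ → 𝒜) (nseq : ℕ → ℕ) (k : ℕ) : 1 ≤ mm a nseq k := by simp [mm]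

theorem mm_two (a : ℕ → 𝒜) (nseq : ℕ → ℕ) (hn : ∀ k, 2 ≤ nseq k) (k : ℕ) :
    2 * mm a nseq k ≤ mm a nseq (k + 1) := by
  rw [mm_succ a nseq hn]; exact Nat.mul_le_mul_right _ (hn k)

theorem mm_gt (a : ℕ → 𝒜) (nseq : ℕ → ℕ) (hn : ∀ k, 2 ≤ nseq k) (k : ℕ) :
    k < mm a nseq k := by
  induction k with
  | zero => simp [mm]
  | succ k ih => have := mm_two a nseq hn k; omega

theorem blk_get (a : ℕ → 𝒜) (nseq : ℕ → ℕ) (hn : ∀ k, 2 ≤ nseq k) (N : ℕ) :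
    ∀ i k, 1 ≤ i → i < mm a nseq N → mm a nseq k ∣ i → ¬ mm a nseq (k + 1) ∣ i →
      (Blk a nseq N)[i - 1]? = some (a k) := by
  induction N with
  | zero => intro i k h1 h2; simp [mm, Blk] at h2; omega
  | succ N ih =>
    intro i k h1 h2 h3 h4
    have h5 : i < nseq N * mm a nseq N := by rwa [mm_succ a nseq hn] at h2
    obtain ⟨c, hc⟩ : ∃ c, nseq N = c + 1 := ⟨nseq N - 1, by have := hn N; omega⟩
    simp only [Blk, sepJoin]
    rw [sj_get _ _ _ _ (by
      rw [hc, Nat.succ_mul] at h5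
      rw [hc, Nat.add_sub_cancel]
      simp only [mm] at h5
      omega)]
    rw [Nat.sub_add_cancel h1]
    change (if mm a nseq N ∣ i then _ else (Blk a nseq N)[i % mm a nseq N - 1]?) = _
    split_ifs with h
    · have hk : k = N := by
        rcases lt_trichotomy k N with hk | hk | hk
        · exact absurd ((mm_dvd a nseq hn hk).trans h) h4
        · exact hk
        · have := Nat.le_of_dvd (by omega) ((mm_dvd a nseq hn hk).trans h3)
          simp only [Nat.succ_eq_add_one] at this
          omega
      rw [hk]
    · have hk : k < N := by
        by_contra hk
        exact h ((mm_dvd a nseq hn (not_lt.mp hk)).trans h3)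
      apply ih
      · exact Nat.pos_of_ne_zero fun h0 => h (Nat.dvd_of_mod_eq_zero h0)
      · exact Nat.mod_lt _ (mm_pos a nseq N)
      · exact (Nat.dvd_mod_iff (mm_dvd a nseq hn hk.le)).2 h3
      · rw [Nat.dvd_mod_iff (mm_dvd a nseq hn hk)]; exact h4

theorem p_get (a : ℕ → 𝒜) (nseq : ℕ → ℕ) (hn : ∀ k, 2 ≤ nseq k)
    (p : ℤ → 𝒜) (hp : IsBlockInf a nseq p) (i k : ℕ) (h1 : 1 ≤ i)
    (h3 : mm a nseq k ∣ i) (h4 : ¬ mm a nseq (k + 1) ∣ i) : p i = a k := by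
  have h2 := mm_gt a nseq hn i
  have h := blk_get a nseq hn i i k h1 h2 h3 h4
  rw [← hp i] at h
  have h5 : i - 1 < (Blk a nseq i).length := by simp only [mm] at h2; omega
  rw [word_eq] at h
  simp only [List.getElem?_map, List.getElem?_range h5, Option.map_some] at h
  have h6 : (1 : ℤ) + ((i - 1 : ℕ) : ℤ) = i := by omega
  rw [h6] at h
  exact Option.some.inj h

theorem p_get' (a : ℕ → 𝒜) (nseq : ℕ → ℕ) (hn : ∀ k, 2 ≤ nseq k)
    (p : ℤ → 𝒜) (hp : IsBlockInf a nseq p) (i : ℤ) (k : ℕ) (h1 : 1 ≤ i)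
    (h3 : (mm a nseq k : ℤ) ∣ i) (h4 : ¬ (mm a nseq (k + 1) : ℤ) ∣ i) : p i = a k := by
  lift i to ℕ using by omega
  exact p_get a nseq hn p hp i k (by omega) (by exact_mod_cast h3) (by exact_mod_cast h4)

theorem exists_switch (P : ℕ → Prop) (K B : ℕ) (h0 : P K) (hB : ∀ k, B ≤ k → ¬ P k) :
    ∃ v, K ≤ v ∧ P v ∧ ¬ P (v + 1) := by
  by_contra! h
  have : ∀ v, K ≤ v → P v := fun v hv => by
    induction v, hv using Nat.le_induction with
    | base => exact h0
    | succ n hn ih => exact h n hn ih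
  exact hB (max K B) (le_max_right _ _) (this _ (le_max_left _ _))

theorem exists_mult (m : ℤ) (hm : 1 ≤ m) (x : ℤ) : ∃ s, x ≤ s ∧ s < x + m ∧ m ∣ s := by
  have h1 := Int.emod_nonneg (-x) (by omega : m ≠ 0)
  have h2 := Int.emod_lt_of_pos (-x) (by omega : 0 < m)
  refine ⟨x + (-x) % m, by omega, by omega, ?_⟩
  rw [Int.dvd_iff_emod_eq_zero]
  simp


end

/-- **Occurrence of words around the origin.** In a simple Toeplitz
subshift with eventual alphabet `{a^(1),…,a^(r)}` (of cardinality ≥ 2), every word of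
length `L ≥ |block(K̃)|` occurs in some leading word `ω^(j)` at a position `-k`,
`1 ≤ k ≤ L`. -/
theorem statement12 {𝒜 : Type*} [Fintype 𝒜]
    (a : ℕ → 𝒜) (nseq : ℕ → ℕ) (ha : ∀ k, a (k + 1) ≠ a k) (hn : ∀ k, 2 ≤ nseq k)
    (p : ℤ → 𝒜) (hp : IsBlockInf a nseq p)
    {r : ℕ} (aj : Fin r → 𝒜) (haj : ∀ x : 𝒜, x ∈ EvAlph a ↔ ∃ j, aj j = x)
    (hcard : ∃ x y : 𝒜, x ∈ EvAlph a ∧ y ∈ EvAlph a ∧ x ≠ y)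
    (K : ℕ) (hK : ∀ k, K ≤ k → a k ∈ EvAlph a) :
    ∀ L : ℕ, (Blk a nseq (K + 1)).length ≤ L →
      ∀ u ∈ WordsN (toeplitzΩ p) L, ∃ j : Fin r, ∃ k : ℕ, 1 ≤ k ∧ k ≤ L ∧
        u = word (leadWordGen p [aj j]) (-(k : ℤ)) L := by
  intro L hL u hu
  obtain ⟨ω, hω, i, rfl⟩ := hu
  obtain ⟨l, hl, hw⟩ := hω i L
  rw [hw]
  obtain ⟨v, hKv, ⟨s, hs1, hs2, hs3⟩, hv⟩ := exists_switch
    (fun k => ∃ s : ℤ, l ≤ s ∧ s < l + L ∧ (mm a nseq k : ℤ) ∣ s) K (l + L).toNat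
    (by
      have h1 := mm_two a nseq hn K
      have h2 := mm_pos a nseq K
      have h3 : mm a nseq (K + 1) ≤ L + 1 := by simp only [mm]; omega
      obtain ⟨s, g1, g2, g3⟩ := exists_mult (mm a nseq K) (by omega) l
      exact ⟨s, g1, by omega, g3⟩)
    (by
      rintro k hk ⟨s, g1, g2, g3⟩
      have := Int.le_of_dvd (by omega) g3
      have := mm_gt a nseq hn k
      omega)
  push Not at hv
  have hdvd : ∀ {i j : ℕ}, i ≤ j → (mm a nseq i : ℤ) ∣ mm a nseq j := fun h =>
    Int.natCast_dvd_natCast.2 (mm_dvd a nseq hn h)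
  obtain ⟨j, hj⟩ := (haj _).1 (hK v hKv)
  refine ⟨j, (s - l + 1).toNat, by omega, by omega, ?_⟩
  rw [word_eq, word_eq]
  apply List.map_congr_left
  intro n hnL
  rw [List.mem_range] at hnL
  have e : -(((s - l + 1).toNat : ℕ) : ℤ) + n = (l + n) - s - 1 := by omega
  rw [e]
  obtain ⟨t, ht⟩ : ∃ t : ℤ, t = l + n := ⟨_, rfl⟩
  rw [← ht]
  have ht1 : l ≤ t := by omega
  have ht2 : t < l + L := by omega
  have hlead : ∀ d : ℤ, leadWordGen p [aj j] (d - 1) = if d = 0 then a v else p |d| := by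
    intro d
    unfold leadWordGen
    simp only [List.length_singleton, Nat.cast_one]
    rcases lt_trichotomy d 0 with h | h | h
    · rw [if_neg (by omega), if_neg (by omega), if_neg (by omega), abs_of_neg h]
      congr 1; ring
    · subst h; simp [hj]
    · rw [if_pos (by omega), if_neg (by omega), abs_of_pos h]
      congr 1; ring
  rw [hlead]
  split_ifs with hd
  · have : t = s := by omega
    subst this
    exact p_get' a nseq hn p hp t v (by omega) hs3 (hv t hs1 hs2)
  · obtain ⟨k, -, hk1, hk2⟩ := exists_switch (fun k => (mm a nseq k : ℤ) ∣ t) 0 (v + 1)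
      (by simp [mm, Blk])
      (fun k hk h => hv t ht1 ht2 ((hdvd hk).trans h))
    have hkv : k ≤ v := by
      by_contra h
      exact hv t ht1 ht2 ((hdvd (by omega)).trans hk1)
    rw [p_get' a nseq hn p hp t k (by omega) hk1 hk2]
    symm
    apply p_get' a nseq hn p hp
    · have := abs_pos.2 hd; omega
    · rw [dvd_abs]; exact dvd_sub hk1 ((hdvd hkv).trans hs3)
    · rw [dvd_abs]
      intro h
      rcases hkv.lt_or_eq with hlt | rfl
      · apply hk2
        have := dvd_add h ((hdvd hlt).trans hs3)
        simpa using this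
      · have h1 : (mm a nseq (k + 1) : ℤ) ≤ |t - s| :=
          Int.le_of_dvd (abs_pos.2 hd) ((dvd_abs _ _).2 h)
        have h2 := mm_pos a nseq (k + 1)
        obtain ⟨z, g1, g2, g3⟩ := exists_mult (mm a nseq (k + 1)) (by omega) (min s t)
        refine hv z (by omega) ?_ g3
        rcases abs_cases (t - s) with h | h <;> omega
end

section
/- Let Ω be the simple Toeplitz subshift defined by coding sequences (a_k) and (n_k). Then for every subadditive function F : W(Ω) → ℝ with asymptotic mean F̄, the limit lim_{k→∞} F(block(k))/|block(k)| exists and equals F̄. -/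
open Filter Topology MeasureTheory

theorem word_def' {𝒜 : Type*} (p : ℤ → 𝒜) (i : ℤ) (n : ℕ) :
    word p i n = (List.range n).map (fun j : ℕ => p (i + (j : ℤ))) := by
  simp [word, List.map_flatMap]
  induction (List.range n) with
  | nil => simp
  | cons x xs ih => simp [ih]

theorem word_length' {𝒜 : Type*} (p : ℤ → 𝒜) (i : ℤ) (n : ℕ) : (word p i n).length = n := by
  simp [word]

theorem word_add' {𝒜 : Type*} (p : ℤ → 𝒜) (i : ℤ) (m n : ℕ) :
    word p i (m + n) = word p i m ++ word p (i + m) n := by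
  simp [word_def', List.range_add, Function.comp_def, add_assoc]

theorem word_congr' {𝒜 : Type*} (p q : ℤ → 𝒜) (i j : ℤ) (n : ℕ)
    (h : ∀ r : ℕ, r < n → p (i + r) = q (j + r)) : word p i n = word q j n := by
  rw [word_def', word_def']
  apply List.map_congr_left
  intro r hr
  exact h r (List.mem_range.1 hr)

theorem word_eq_iff' {𝒜 : Type*} (p q : ℤ → 𝒜) (i j : ℤ) (n : ℕ)
    (h : word p i n = word q j n) (r : ℕ) (hr : r < n) : p (i + r) = q (j + r) := by
  rw [word_def', word_def'] at h
  exact List.map_inj_left.1 h r (List.mem_range.2 hr)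

theorem blk_form {𝒜 : Type*} (a : ℕ → 𝒜) (nseq : ℕ → ℕ) (k j : ℕ) :
    ∃ xs : List 𝒜, Blk a nseq (k + j)
      = (xs.map (fun x => Blk a nseq k ++ [x])).flatten ++ Blk a nseq k := by
  induction j with
  | zero => exact ⟨[], by simp⟩
  | succ j ih =>
    obtain ⟨xs, hxs⟩ := ih
    refine ⟨(List.replicate (nseq (k + j) - 1) (xs ++ [a (k + j)])).flatten ++ xs, ?_⟩
    have h : Blk a nseq (k + (j + 1))
      = sepJoin (Blk a nseq (k + j)) (a (k + j)) (nseq (k + j)) := rfl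
    rw [h, sepJoin]
    generalize nseq (k + j) - 1 = m
    rw [hxs]
    induction m with
    | zero => simp
    | succ m ihm =>
      simp only [List.replicate_succ, List.flatten_cons, List.append_assoc] at ihm ⊢
      rw [ihm]
      simp

theorem blk_len {𝒜 : Type*} (a : ℕ → 𝒜) (nseq : ℕ → ℕ) (hn : ∀ k, 2 ≤ nseq k) (k : ℕ) :
    k ≤ (Blk a nseq k).length := by
  induction k with
  | zero => simp
  | succ k ih =>
    have h := hn k
    obtain ⟨m, hm⟩ : ∃ m, nseq k - 1 = m + 1 := ⟨nseq k - 2, by omega⟩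
    simp only [Blk, sepJoin, hm, List.replicate_succ, List.flatten_cons, List.length_append,
      List.length_singleton]
    omega

theorem aligned_aux {𝒜 : Type*} (p : ℤ → 𝒜) (B : List 𝒜) (xs : List 𝒜) (i : ℤ) (n : ℕ)
    (h : word p i n = (xs.map (fun x => B ++ [x])).flatten ++ B) (q : ℕ) (hq : q ≤ xs.length) :
    word p (i + q * (B.length + 1)) B.length = B := by
  induction xs generalizing i n q with
  | nil =>
    have : q = 0 := by simpa using hq
    subst this
    have hl := congrArg List.length h
    simp [word_length'] at hl
    subst hl
    simpa using h
  | cons x xs ih =>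
    have hl := congrArg List.length h
    rw [word_length'] at hl
    simp only [List.map_cons, List.flatten_cons, List.length_append, List.length_singleton] at hl
    obtain ⟨n', rfl⟩ : ∃ n', n = B.length + (1 + n') := ⟨n - (B.length + 1), by omega⟩
    rw [word_add', word_add'] at h
    simp only [List.map_cons, List.flatten_cons, List.append_assoc] at h
    obtain ⟨h1, h2⟩ := List.append_inj h (word_length' _ _ _)
    obtain ⟨h3, h4⟩ := List.append_inj h2 (by simp [word_length'])
    cases q with
    | zero => simpa using h1
    | succ q =>
      have := ih _ _ h4 q (by simpa using hq)
      have e : i + ((q + 1 : ℕ) : ℤ) * (B.length + 1)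
        = i + B.length + (1 : ℕ) + q * (B.length + 1) := by push_cast; ring
      rw [e]
      exact this

theorem aligned {𝒜 : Type*} (a : ℕ → 𝒜) (nseq : ℕ → ℕ) (hn : ∀ k, 2 ≤ nseq k)
    (p : ℤ → 𝒜) (hp : IsBlockInf a nseq p) (k q : ℕ) :
    word p (1 + q * ((Blk a nseq k).length + 1)) (Blk a nseq k).length = Blk a nseq k := by
  set c := (Blk a nseq k).length + 1 with hc
  obtain ⟨xs, hxs⟩ := blk_form a nseq k (q * c + c)
  have h := hp (k + (q * c + c))
  rw [hxs] at h
  apply aligned_aux p _ xs 1 _ h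
  have h2 := blk_len a nseq hn (k + (q * c + c))
  rw [hxs] at h2
  have h3 : ((xs.map (fun x => Blk a nseq k ++ [x])).flatten).length = xs.length * c := by
    clear hxs h h2
    induction xs with
    | nil => simp
    | cons x xs ih => simp [ih, hc]; ring
  rw [List.length_append, h3] at h2
  have : q * c ≤ xs.length * c := by omega
  exact Nat.le_of_mul_le_mul_right this (by omega)

theorem word_mem {𝒜 : Type*} [Fintype 𝒜] (a : ℕ → 𝒜) (nseq : ℕ → ℕ) (hn : ∀ k, 2 ≤ nseq k)
    (p : ℤ → 𝒜) (hp : IsBlockInf a nseq p) (l n : ℕ) :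
    word p (1 + l) n ∈ WordsN (toeplitzΩ p) n := by
  set K := l + n
  have hK := blk_len a nseq hn K
  set L := (Blk a nseq K).length with hL
  have key : ∀ j : ℕ, ∀ r : ℕ, r < n → p (1 + l + j * (L + 1) + r) = p (1 + l + r) := by
    intro j r hr
    have h1 := aligned a nseq hn p hp K j
    have h2 := hp K
    have := word_eq_iff' p p _ _ _ (h1.trans h2.symm) (l + r) (by omega)
    rw [← hL] at this
    push_cast at this
    convert this using 2 <;> ring
  have hex : ∀ i : ℤ, ∃ x : 𝒜, ∀ᶠ j : ℕ in (Filter.hyperfilter ℕ : Filter ℕ),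
      p (1 + l + j * (L + 1) + i) = x := by
    intro i
    obtain ⟨x, hx⟩ := Ultrafilter.eq_pure_of_finite
      ((Filter.hyperfilter ℕ).map (fun j : ℕ => p (1 + l + j * (L + 1) + i)))
    refine ⟨x, ?_⟩
    have : ({x} : Set 𝒜) ∈ (Filter.hyperfilter ℕ).map (fun j : ℕ => p (1 + l + j * (L + 1) + i)) := by
      rw [hx]; exact Ultrafilter.mem_pure.2 rfl
    exact Ultrafilter.mem_map.1 this
  choose ω hω using hex
  refine ⟨ω, ?_, 0, ?_⟩
  · intro i m
    have h1 : ∀ᶠ j : ℕ in (Filter.hyperfilter ℕ : Filter ℕ), ∀ r ∈ Finset.range m,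
        p (1 + l + j * (L + 1) + (i + r)) = ω (i + r) :=
      (Filter.eventually_all_finset _).2 fun r _ => hω (i + r)
    have h2 : ∀ᶠ j : ℕ in (Filter.hyperfilter ℕ : Filter ℕ), i.natAbs ≤ j :=
      Nat.hyperfilter_le_atTop (Filter.eventually_ge_atTop _)
    obtain ⟨j, hj1, hj2⟩ := (h1.and h2).exists
    refine ⟨1 + l + j * (L + 1) + i, ?_, ?_⟩
    · have : (j : ℤ) * (L + 1) ≥ j := by nlinarith
      omega
    · apply word_congr'
      intro r hr
      rw [← hj1 r (Finset.mem_range.2 hr)]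
      congr 1; ring
  · apply word_congr'
    intro r hr
    obtain ⟨j, hj⟩ := (hω (0 + r)).exists
    rw [← hj, ← key j r hr]
    simp

theorem abstract_bound (g : ℕ → ℕ → ℝ) (C b : ℝ) (L : ℕ) (hC : 0 ≤ C)
    (h0 : ∀ l, g l 0 = 0) (h1 : ∀ l, g l 1 ≤ C)
    (hs : ∀ l m n, g l (m + n) ≤ g l m + g (l + m) n)
    (hb : ∀ q, g (q * (L + 1)) L ≤ b) (l N : ℕ) :
    g l N ≤ (N / (L + 1) : ℝ) * (b + C) + (2 * (L + 1) * C + 2 * |b + C|) := by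
  have triv : ∀ n l, g l n ≤ n * C := by
    intro n
    induction n with
    | zero => intro l; simp [h0]
    | succ n ih =>
      intro l
      have := hs l n 1
      have := ih l
      have := h1 (l + n)
      push_cast
      linarith
  have al : ∀ m q, g (q * (L + 1)) (m * (L + 1)) ≤ m * (b + C) := by
    intro m
    induction m with
    | zero => intro q; simp [h0]
    | succ m ih =>
      intro q
      have e1 := hs (q * (L + 1)) (L + 1) (m * (L + 1))
      have e2 := hs (q * (L + 1)) L 1
      have e3 := hb q
      have e4 := h1 (q * (L + 1) + L)
      have e5 := ih (q + 1)
      have e6 : (q + 1) * (L + 1) = q * (L + 1) + (L + 1) := by ring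
      have e7 : (m + 1) * (L + 1) = (L + 1) + m * (L + 1) := by ring
      rw [e6] at e5
      rw [e7]
      push_cast
      linarith
  have hcpos : (0 : ℝ) < (L : ℝ) + 1 := by positivity
  have hab := abs_nonneg (b + C)
  have hcmp : ∀ t : ℝ, |t| ≤ 2 → t * (b + C) ≤ 2 * |b + C| := by
    intro t ht
    calc t * (b + C) ≤ |t * (b + C)| := le_abs_self _
      _ = |t| * |b + C| := abs_mul _ _
      _ ≤ _ := by gcongr
  set s := L + 1 - l % (L + 1) with hsd
  have hml := Nat.mod_lt l (Nat.succ_pos L)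
  have hsl : l + s = (l / (L + 1) + 1) * (L + 1) := by
    have := Nat.div_add_mod l (L + 1)
    have h' : (l / (L + 1) + 1) * (L + 1) = (L + 1) * (l / (L + 1)) + (L + 1) := by ring
    rw [h']
    simp only [Nat.succ_eq_add_one] at hml
    omega
  by_cases hN : N < s
  · have hN' : (N : ℝ) ≤ L + 1 := by
      have : N ≤ L + 1 := by omega
      exact_mod_cast this
    have e1 := triv N l
    have e2 := hcmp (-(N / (L + 1) : ℝ)) (by
      rw [abs_neg, abs_of_nonneg (by positivity), div_le_iff₀ hcpos]; linarith)
    have e3 : (N : ℝ) * C ≤ (L + 1) * C := by gcongr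
    have e4 : 0 ≤ ((L : ℝ) + 1) * C := by positivity
    linarith
  · obtain ⟨M, rfl⟩ : ∃ M, N = s + M := ⟨N - s, by omega⟩
    have hM := Nat.div_add_mod M (L + 1)
    set m := M / (L + 1)
    set r := M % (L + 1) with hr
    have hrl : r < L + 1 := Nat.mod_lt M (Nat.succ_pos L)
    have hM' : M = m * (L + 1) + r := by rw [← hM]; ring
    have e1 := hs l s M
    have e2 := triv s l
    have e3 := hs (l + s) (m * (L + 1)) r
    rw [← hM', hsl] at e3
    have e4 := al m (l / (L + 1) + 1)
    have e5 := triv r ((l / (L + 1) + 1) * (L + 1) + m * (L + 1))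
    rw [hsl] at e1
    have hsR : (s : ℝ) ≤ L + 1 := by
      have : s ≤ L + 1 := by omega
      exact_mod_cast this
    have hrR : (r : ℝ) ≤ L + 1 := by
      have : r ≤ L + 1 := by omega
      exact_mod_cast this
    have e6 : (s : ℝ) * C ≤ (L + 1) * C := by gcongr
    have e7 : (r : ℝ) * C ≤ (L + 1) * C := by gcongr
    have hMR : (M : ℝ) = m * (L + 1) + r := by exact_mod_cast hM'
    have e8 : ((s + M : ℕ) : ℝ) / (L + 1) = m + (s + r) / (L + 1) := by
      push_cast
      rw [hMR]
      field_simp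
      ring
    have e9 := hcmp (-((s + r) / (L + 1) : ℝ)) (by
      rw [abs_neg, abs_of_nonneg (by positivity), div_le_iff₀ hcpos]; linarith)
    rw [e8]
    linarith

/-- Along the blocks of a simple Toeplitz subshift, every subadditive
function attains its asymptotic mean: `F(block(k))/|block(k)| → F̄`. -/
theorem statement14 {𝒜 : Type*} [Fintype 𝒜]
    (a : ℕ → 𝒜) (nseq : ℕ → ℕ) (ha : ∀ k, a (k + 1) ≠ a k) (hn : ∀ k, 2 ≤ nseq k)
    (p : ℤ → 𝒜) (hp : IsBlockInf a nseq p)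
    (F : List 𝒜 → ℝ) (hF : SubadditiveOn (toeplitzΩ p) F)
    (Fb : ℝ) (hFb : IsAsympMean (toeplitzΩ p) F Fb) :
    Filter.Tendsto (fun k : ℕ => F (Blk a nseq (k + 1)) / (Blk a nseq (k + 1)).length)
      Filter.atTop (nhds Fb) := by
  classical
  set C : ℝ := ∑ x : 𝒜, |F [x]| with hCdef
  have hC : 0 ≤ C := Finset.sum_nonneg fun _ _ => abs_nonneg _
  have hC1 : ∀ x, F [x] ≤ C := fun x => (le_abs_self _).trans
    (Finset.single_le_sum (f := fun x => |F [x]|) (fun _ _ => abs_nonneg _) (Finset.mem_univ x))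
  have hmem : ∀ l n : ℕ, 1 ≤ n → word p (1 + l) n ∈ Words (toeplitzΩ p) := by
    intro l n h
    refine ⟨by rw [word_length']; exact h, ?_⟩
    rw [word_length']
    exact word_mem a nseq hn p hp l n
  set g : ℕ → ℕ → ℝ := fun l n => if n = 0 then 0 else F (word p (1 + l) n) with hg
  have h0 : ∀ l, g l 0 = 0 := by intro l; simp [hg]
  have hgF : ∀ l n, 1 ≤ n → g l n = F (word p (1 + l) n) := by
    intro l n h
    simp only [hg]
    rw [if_neg (by omega)]
  have h1 : ∀ l, g l 1 ≤ C := by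
    intro l
    rw [hgF l 1 le_rfl]
    simpa [word] using hC1 _
  have hs : ∀ l m n, g l (m + n) ≤ g l m + g (l + m) n := by
    intro l m n
    rcases Nat.eq_zero_or_pos m with rfl | hm
    · simp [h0]
    rcases Nat.eq_zero_or_pos n with rfl | hn'
    · simp [h0]
    rw [hgF _ _ hm, hgF _ _ hn', hgF _ _ (by omega)]
    have e := word_add' p (1 + l) m n
    have e2 : (1 + (l : ℤ) + m) = 1 + ((l + m : ℕ) : ℤ) := by push_cast; ring
    have h3 := hmem l (m + n) (by omega)
    rw [e2] at e
    rw [e] at h3 ⊢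
    exact hF _ _ (hmem l m hm) (hmem (l + m) n hn') h3
  have hsub : ∀ n x, x ∈ WordsN (toeplitzΩ p) n → ∃ l : ℕ, x = word p (1 + l) n := by
    rintro n x ⟨ω, hω, k, rfl⟩
    obtain ⟨l, hl, h⟩ := hω k n
    refine ⟨(l - 1).toNat, ?_⟩
    rw [h]
    congr 1
    omega
  set S : ℕ → ℝ := fun n => sSup ((fun x => F x / n) '' WordsN (toeplitzΩ p) n) with hS
  have hFbS : Tendsto S atTop (𝓝 Fb) := hFb
  have hlen : ∀ k, k ≤ (Blk a nseq k).length := blk_len a nseq hn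
  have hbound : ∀ k : ℕ, 1 ≤ k → ∀ n : ℕ, 1 ≤ n → ∀ x ∈ WordsN (toeplitzΩ p) n,
      F x / n ≤ (F (Blk a nseq k) + C) / ((Blk a nseq k).length + 1) +
        (2 * ((Blk a nseq k).length + 1) * C + 2 * |F (Blk a nseq k) + C|) / n := by
    intro k hk n hn' x hx
    obtain ⟨l, rfl⟩ := hsub n x hx
    have hb : ∀ q, g (q * ((Blk a nseq k).length + 1)) (Blk a nseq k).length
        ≤ F (Blk a nseq k) := by
      intro q
      rw [hgF _ _ (hk.trans (hlen k))]
      have := aligned a nseq hn p hp k q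
      push_cast
      rw [this]
    have h := abstract_bound g C _ _ hC h0 h1 hs hb l n
    rw [hgF _ _ hn'] at h
    have hnR : (0 : ℝ) < n := by exact_mod_cast hn'
    rw [div_le_iff₀ hnR]
    refine h.trans (le_of_eq ?_)
    field_simp
  have hlow : ∀ k : ℕ, 1 ≤ k →
      Fb ≤ (F (Blk a nseq k) + C) / ((Blk a nseq k).length + 1) := by
    intro k hk
    have ht : Tendsto (fun n : ℕ => (F (Blk a nseq k) + C) / ((Blk a nseq k).length + 1) +
        (2 * ((Blk a nseq k).length + 1) * C + 2 * |F (Blk a nseq k) + C|) / (n : ℝ)) atTop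
        (𝓝 ((F (Blk a nseq k) + C) / ((Blk a nseq k).length + 1) + 0)) :=
      tendsto_const_nhds.add (tendsto_const_div_atTop_nhds_zero_nat _)
    rw [add_zero] at ht
    refine le_of_tendsto_of_tendsto hFbS ht ?_
    filter_upwards [eventually_ge_atTop 1] with n hn'
    apply csSup_le
    · exact ⟨_, _, word_mem a nseq hn p hp 0 n, rfl⟩
    · rintro _ ⟨x, hx, rfl⟩
      exact hbound k hk n hn' x hx
  have hup : ∀ k : ℕ, F (Blk a nseq (k + 1)) / (Blk a nseq (k + 1)).length
      ≤ S (Blk a nseq (k + 1)).length := by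
    intro k
    apply le_csSup
    · refine ⟨(F (Blk a nseq 1) + C) / ((Blk a nseq 1).length + 1) +
          (2 * ((Blk a nseq 1).length + 1) * C + 2 * |F (Blk a nseq 1) + C|) /
            ((Blk a nseq (k + 1)).length : ℝ), ?_⟩
      rintro _ ⟨x, hx, rfl⟩
      exact hbound 1 le_rfl _ (le_trans (by omega) (hlen (k + 1))) x hx
    · refine ⟨_, ?_, rfl⟩
      have := word_mem a nseq hn p hp 0 (Blk a nseq (k + 1)).length
      have e := hp (k + 1)
      simp only [Nat.cast_zero, add_zero] at this
      rwa [e] at this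
  have hLt : Tendsto (fun k => (Blk a nseq (k + 1)).length) atTop atTop :=
    tendsto_atTop_mono (fun k => (Nat.le_succ k).trans (hlen (k + 1))) tendsto_id
  have hlowlim : Tendsto (fun k => Fb + (Fb - C) / ((Blk a nseq (k + 1)).length : ℝ)) atTop
      (𝓝 (Fb + 0)) :=
    tendsto_const_nhds.add ((tendsto_const_div_atTop_nhds_zero_nat (Fb - C)).comp hLt)
  rw [add_zero] at hlowlim
  refine tendsto_of_tendsto_of_tendsto_of_le_of_le hlowlim (hFbS.comp hLt) ?_ hup
  intro k
  have h := hlow (k + 1) (by omega)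
  have hpos : (0 : ℝ) < (Blk a nseq (k + 1)).length := by
    have := hlen (k + 1)
    exact_mod_cast (by omega : 0 < (Blk a nseq (k + 1)).length)
  rw [le_div_iff₀ (by positivity)] at h
  show Fb + (Fb - C) / ((Blk a nseq (k + 1)).length : ℝ) ≤ _
  rw [le_div_iff₀ hpos, add_mul, div_mul_cancel₀ _ hpos.ne']
  linarith
end
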